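/- For all w, v ∈ ℌ̂⁰ one has w ⧢_q v = σ(σ(w) *_q σ(v)), where ⧢_q is the q-shuffle product, *_q is the q-stuffle product, and σ is the anti-automorphism of ℌ̂ with σ(a)=ℏb, σ(b)=ℏ⁻¹a. -/

import Mathlib

/-!
The map `σ` sends `e_k = a^k b` to `f_k = ℏ^(k-1) a b^k` and reverses products, and it is an
involution. So it suffices to show `σ x ⧢_q σ y = σ (x *_q y)` for `x`, `y` in the span of the words
`e_{k₁}⋯e_{k_r}`, a span which contains `σ(ℌ̂⁰)` because admissible words start with `a`.

On the stuffle side, `*_q` also satisfies the recursion that splits off the *last* letters `e_k`,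
`e_l` (`stuffle_concat`, the usual left-right symmetry of quasi-shuffle products). Transported by
`σ`, this becomes a recursion in the *first* blocks `f_k`, `f_l`.

On the shuffle side, the choice of `⋄_q` makes `b` transparent: `(b x) ⧢_q y = b (x ⧢_q y)`
and `x ⧢_q (b y) = b (x ⧢_q y)` (`shuffle_b_left`, `shuffle_b_right`). Together with the
defining recursion for two words starting with `a` this gives
`f_k x ⧢_q f_l y = f_k (x ⧢_q f_l y) + f_l (f_k x ⧢_q y) + f_{k+l} (x ⧢_q y)`, where the factor `ℏ`
of `a ⋄_q a = ℏ a` accounts for `ℏ^(k-1) ℏ^(l-1) ℏ = ℏ^(k+l-1)`. The two recursions agree.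
-/

/- STATEMENT 18 (Corollary): For all w, v ∈ ℌ̂⁰ one has
w ⧢_q v = σ(σ(w) *_q σ(v)), where ⧢_q is the q-shuffle product (the generalized
quasi-shuffle product associated to ⋄_q with a⋄_qa = ℏa, a⋄_qb = b⋄_qa = −ab,
b⋄_qb = −bb), *_q is the q-stuffle product on ℌ̂¹ = 𝒞⟨e₀,e₁,…⟩ (e_k = a^k b),
and σ is the 𝒞-linear anti-automorphism of ℌ̂ = 𝒞⟨a,b⟩ with σ(a) = ℏb,
σ(b) = ℏ⁻¹a. -/

noncomputable section

/-- The two letters a, b of ℌ̂ = 𝒞⟨a,b⟩. -/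
inductive AB : Type
  | a : AB
  | b : AB
  deriving DecidableEq

/-- 𝒞 = ℚ[ℏ,ℏ⁻¹]. -/
abbrev CC : Type := LaurentPolynomial ℚ

/-- ℏ ∈ 𝒞. -/
def hbar : CC := LaurentPolynomial.T 1

/-- A word in the letters a, b as an element of ℌ̂ = 𝒞⟨a,b⟩. -/
def ofW (w : List AB) : MonoidAlgebra CC (FreeMonoid AB) :=
  MonoidAlgebra.of CC (FreeMonoid AB) (FreeMonoid.ofList w)

/-- The word e_{k₁}⋯e_{k_r} ∈ ℌ̂, where e_k = a^k b. -/
def eWord (ks : List ℕ) : List AB :=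
  (ks.map fun k => List.replicate k AB.a ++ [AB.b]).flatten

/-- The values of ⋄_q on the letters. -/
def dq : AB → AB → MonoidAlgebra CC (FreeMonoid AB)
  | AB.a, AB.a => hbar • ofW [AB.a]
  | AB.a, AB.b => -ofW [AB.a, AB.b]
  | AB.b, AB.a => -ofW [AB.a, AB.b]
  | AB.b, AB.b => -ofW [AB.b, AB.b]

/-- Exchanging the letters a and b. -/
def swapAB : AB → AB
  | AB.a => AB.b
  | AB.b => AB.a

/-- The index list (k₁,…,k_r) is admissible: either empty or k₁ ≥ 1. -/
def Admissible (l : List ℕ) : Prop := ∀ h : l ≠ [], 1 ≤ l.head h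

/-- ℌ̂⁰, the 𝒞-span of 𝟏 and the admissible words e_{k₁}⋯e_{k_r}, k₁ ≥ 1. -/
def H0 : Submodule CC (MonoidAlgebra CC (FreeMonoid AB)) :=
  Submodule.span CC {x | ∃ ks : List ℕ, Admissible ks ∧ x = ofW (eWord ks)}

/-- The ambient algebra `ℌ̂ = 𝒞⟨a,b⟩`. -/
abbrev HH : Type := MonoidAlgebra CC (FreeMonoid AB)

theorem ofW_nil : ofW [] = 1 := rfl

theorem ofW_append (u v : List AB) : ofW (u ++ v) = ofW u * ofW v := by
  simp [ofW, FreeMonoid.ofList_append]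

theorem ofW_cons (x : AB) (v : List AB) : ofW (x :: v) = ofW [x] * ofW v :=
  ofW_append [x] v

theorem ofW_replicate (k : ℕ) (x : AB) : ofW (List.replicate k x) = ofW [x] ^ k := by
  induction k with
  | zero => rfl
  | succ k ih => rw [List.replicate_succ, ofW_cons, ih, pow_succ']

/-- The words span `ℌ̂`, in the form of an induction principle. -/
@[elab_as_elim]
theorem word_induction {P : HH → Prop} (x : HH) (h : ∀ w, P (ofW w))
    (hadd : ∀ x y, P x → P y → P (x + y)) (hsmul : ∀ (r : CC) x, P x → P (r • x)) : P x :=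
  MonoidAlgebra.induction_on x (fun g => h (FreeMonoid.toList g)) hadd hsmul

/-- The span `ℌ̂¹` of all words `e_{k₁}⋯e_{k_r}`. -/
def H1 : Submodule CC HH :=
  Submodule.span CC (Set.range fun ks : List ℕ => ofW (eWord ks))

theorem eWord_cons (k : ℕ) (ks : List ℕ) : eWord (k :: ks) = eWord [k] ++ eWord ks := by
  simp [eWord]

theorem eWord_append (ks ls : List ℕ) : eWord (ks ++ ls) = eWord ks ++ eWord ls := by
  simp [eWord]

/-- Every word ending in `b` is a product of letters `e_k`. -/
theorem exists_eWord (w : List AB) : ∃ k ks, w ++ [AB.b] = eWord (k :: ks) := by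
  induction w with
  | nil => exact ⟨0, [], by simp [eWord]⟩
  | cons x w ih =>
    obtain ⟨k, ks, h⟩ := ih
    cases x with
    | a => exact ⟨k + 1, ks, by rw [List.cons_append, h]; simp [eWord, List.replicate_succ]⟩
    | b => exact ⟨0, k :: ks, by rw [List.cons_append, h]; simp [eWord]⟩

/-! ### Splitting off last letters in the stuffle product -/

/-- The recursion for `*_q` in the last letters `e_k`, `e_l`. -/
theorem stuffle_concat (st : HH →ₗ[CC] HH →ₗ[CC] HH)
    (hst_one : ∀ x, st 1 x = x) (hst_one' : ∀ x, st x 1 = x)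
    (hst : ∀ (k l : ℕ) (ks ls : List ℕ),
      st (ofW (eWord (k :: ks))) (ofW (eWord (l :: ls))) =
        ofW (eWord [k]) * st (ofW (eWord ks)) (ofW (eWord (l :: ls)))
        + ofW (eWord [l]) * st (ofW (eWord (k :: ks))) (ofW (eWord ls))
        + ofW (eWord [k + l]) * st (ofW (eWord ks)) (ofW (eWord ls)))
    (k l : ℕ) (ks ls : List ℕ) :
    st (ofW (eWord (ks ++ [k]))) (ofW (eWord (ls ++ [l]))) =
      st (ofW (eWord ks)) (ofW (eWord (ls ++ [l]))) * ofW (eWord [k])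
      + st (ofW (eWord (ks ++ [k]))) (ofW (eWord ls)) * ofW (eWord [l])
      + st (ofW (eWord ks)) (ofW (eWord ls)) * ofW (eWord [k + l]) := by
  have h0 : ofW (eWord []) = 1 := rfl
  have hc : ∀ (k : ℕ) (ks : List ℕ),
      ofW (eWord (k :: ks)) = ofW (eWord [k]) * ofW (eWord ks) := fun k ks => by
    rw [eWord_cons, ofW_append]
  have ha : ∀ (k : ℕ) (ks : List ℕ),
      ofW (eWord (ks ++ [k])) = ofW (eWord ks) * ofW (eWord [k]) := fun k ks => by
    rw [eWord_append, ofW_append]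
  induction ks generalizing ls with
  | nil =>
    induction ls with
    | nil =>
      simp only [List.nil_append, hst, h0, hst_one, hst_one', mul_one, one_mul]
      abel
    | cons q ls ih =>
      simp only [List.nil_append, List.cons_append, hst, h0, hst_one] at ih ⊢
      rw [ih, hc q (ls ++ [l]), hc q ls, ha]
      simp only [mul_add, add_mul, mul_assoc]
      abel
  | cons p ks ihk =>
    induction ls with
    | nil =>
      have ih := ihk []
      simp only [List.nil_append, List.cons_append, hst, h0, hst_one'] at ih ⊢
      rw [ih, hc p (ks ++ [k]), hc p ks, ha]
      simp only [mul_add, add_mul, mul_assoc]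
      abel
    | cons q ls ihl =>
      have ih1 := ihk (q :: ls)
      have ih2 := ihk ls
      simp only [List.cons_append] at ih1 ih2 ihl ⊢
      rw [hst, hst p q ks (ls ++ [l]), hst p q (ks ++ [k]) ls, hst p q ks ls, ih1, ih2, ihl]
      simp only [mul_add, add_mul, mul_assoc]
      abel

/-! ### Transparency of `b` for the shuffle product -/

/-- `neg_mul` for `ℌ̂`. Unifying its instances directly against those found in terms involving `dq`
is very slow, hence the specialised form. -/
theorem HH_neg_mul (x y : HH) : -x * y = -(x * y) := neg_mul x y

theorem dq_b_left (β : AB) (z : HH) : dq AB.b β * z = -(ofW [β] * (ofW [AB.b] * z)) := by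
  cases β <;> rw [dq, ofW_cons _ [AB.b], HH_neg_mul, mul_assoc]

theorem dq_b_right (β : AB) (z : HH) : dq β AB.b * z = -(ofW [β] * (ofW [AB.b] * z)) := by
  cases β <;> rw [dq, ofW_cons _ [AB.b], HH_neg_mul, mul_assoc]

section Shuffle

variable (sh : HH →ₗ[CC] HH →ₗ[CC] HH)
  (hsh_one : ∀ x, sh 1 x = x) (hsh_one' : ∀ x, sh x 1 = x)
  (hsh : ∀ (α β : AB) (w v : List AB),
    sh (ofW (α :: w)) (ofW (β :: v)) =
      ofW [α] * sh (ofW w) (ofW (β :: v))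
      + ofW [β] * sh (ofW (α :: w)) (ofW v)
      + dq α β * sh (ofW w) (ofW v))

include hsh_one' hsh in
/-- Against a word `β v` the terms `β (b x ⧢_q v)` and `(b ⋄_q β)(x ⧢_q v)` of the recursion cancel,
by induction on the second word. -/
theorem shuffle_b_left (x y : HH) : sh (ofW [AB.b] * x) y = ofW [AB.b] * sh x y := by
  refine word_induction x (fun w => ?_) (fun x x' h h' => ?_) (fun r x h => ?_)
  · refine word_induction y (fun v => ?_) (fun y y' h h' => ?_) (fun r y h => ?_)
    · rw [← ofW_cons]
      induction v with
      | nil => rw [ofW_nil, hsh_one', hsh_one', ofW_cons]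
      | cons β v ih =>
        rw [hsh, ih, dq_b_left, add_neg_cancel_right]
    · simp only [map_add, mul_add, h, h']
    · simp only [map_smul, mul_smul_comm, h]
  · simp only [map_add, mul_add, LinearMap.add_apply, h, h']
  · simp only [map_smul, mul_smul_comm, LinearMap.smul_apply, h]

include hsh_one hsh in
theorem shuffle_b_right (x y : HH) : sh x (ofW [AB.b] * y) = ofW [AB.b] * sh x y := by
  refine word_induction x (fun w => ?_) (fun x x' h h' => ?_) (fun r x h => ?_)
  · refine word_induction y (fun v => ?_) (fun y y' h h' => ?_) (fun r y h => ?_)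
    · rw [← ofW_cons]
      induction w with
      | nil => rw [ofW_nil, hsh_one, hsh_one, ofW_cons]
      | cons β v ih =>
        rw [hsh, ih, dq_b_right, add_right_comm, add_neg_cancel, zero_add]
    · simp only [map_add, mul_add, h, h']
    · simp only [map_smul, mul_smul_comm, h]
  · simp only [map_add, mul_add, LinearMap.add_apply, h, h']
  · simp only [map_smul, mul_smul_comm, LinearMap.smul_apply, h]

include hsh_one' hsh in
theorem shuffle_pow_left (k : ℕ) (x y : HH) :
    sh (ofW [AB.b] ^ k * x) y = ofW [AB.b] ^ k * sh x y := by
  induction k with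
  | zero => simp
  | succ k ih => rw [pow_succ', mul_assoc, shuffle_b_left sh hsh_one' hsh, ih, mul_assoc]

include hsh_one hsh in
theorem shuffle_pow_right (k : ℕ) (x y : HH) :
    sh x (ofW [AB.b] ^ k * y) = ofW [AB.b] ^ k * sh x y := by
  induction k with
  | zero => simp
  | succ k ih => rw [pow_succ', mul_assoc, shuffle_b_right sh hsh_one hsh, ih, mul_assoc]

include hsh in
/-- The defining recursion for two words starting with `a`, extended linearly. -/
theorem shuffle_a_a (x y : HH) : sh (ofW [AB.a] * x) (ofW [AB.a] * y) =
    ofW [AB.a] * sh x (ofW [AB.a] * y) + ofW [AB.a] * sh (ofW [AB.a] * x) y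
      + hbar • (ofW [AB.a] * sh x y) := by
  refine word_induction x (fun w => ?_) (fun x x' h h' => ?_) (fun r x h => ?_)
  · refine word_induction y (fun v => ?_) (fun y y' h h' => ?_) (fun r y h => ?_)
    · rw [← ofW_cons, ← ofW_cons, hsh, dq, smul_mul_assoc]
    · simp only [map_add, mul_add, h, h', smul_add]
      abel
    · simp only [map_smul, mul_smul_comm, h, smul_add, smul_comm r hbar]
  · simp only [map_add, mul_add, LinearMap.add_apply, h, h', smul_add]
    abel
  · simp only [map_smul, mul_smul_comm, LinearMap.smul_apply, h, smul_add, smul_comm r hbar]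

end Shuffle

/-! ### The anti-automorphism `σ` -/

section Sigma

variable (sigma : HH →ₗ[CC] HH)
  (hsigma : ∀ w : List AB,
    sigma (ofW w) =
      (LaurentPolynomial.T ((w.count AB.a : ℤ) - (w.count AB.b : ℤ)) : CC)
        • ofW ((w.map swapAB).reverse))

include hsigma in
theorem sigma_mul (x y : HH) : sigma (x * y) = sigma y * sigma x := by
  refine word_induction x (fun w => ?_) (fun x x' h h' => ?_) (fun r x h => ?_)
  · refine word_induction y (fun v => ?_) (fun y y' h h' => ?_) (fun r y h => ?_)
    · rw [← ofW_append, hsigma, hsigma, hsigma, smul_mul_smul_comm, ← LaurentPolynomial.T_add,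
        List.map_append, List.reverse_append, ofW_append, List.count_append, List.count_append]
      congr 2
      push_cast
      ring
    · simp only [map_add, mul_add, add_mul, h, h']
    · simp only [map_smul, mul_smul_comm, smul_mul_assoc, h]
  · simp only [map_add, mul_add, add_mul, h, h']
  · simp only [map_smul, mul_smul_comm, smul_mul_assoc, h]

include hsigma in
theorem sigma_sigma (x : HH) : sigma (sigma x) = x := by
  have hs : ∀ w : List AB, (w.map swapAB).count AB.a = w.count AB.b ∧
      (w.map swapAB).count AB.b = w.count AB.a ∧ (w.map swapAB).map swapAB = w := fun w => by
    induction w with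
    | nil => simp
    | cons x w ih => cases x <;> simp [swapAB, ih]
  refine word_induction x (fun w => ?_) (fun x x' h h' => ?_) (fun r x h => ?_)
  · rw [hsigma, map_smul, hsigma, smul_smul, ← LaurentPolynomial.T_add, List.map_reverse,
      List.reverse_reverse, List.count_reverse, List.count_reverse, (hs w).1, (hs w).2.1,
      (hs w).2.2]
    simp
  · rw [map_add, map_add, h, h']
  · rw [map_smul, map_smul, h]

include hsigma in
/-- `σ(e_k) = ℏ^(k-1) a b^k`. -/
theorem sigma_e (k : ℕ) : sigma (ofW (eWord [k])) =
    (LaurentPolynomial.T ((k : ℤ) - 1) : CC) • (ofW [AB.a] * ofW [AB.b] ^ k) := by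
  rw [hsigma, ← ofW_replicate, ← ofW_cons]
  congr 2 <;> simp [eWord, swapAB, List.count_replicate]

include hsigma in
/-- `σ` maps `ℌ̂⁰` into `ℌ̂¹`: an admissible word starts with `a`, so its dual ends in `b`. -/
theorem sigma_mem_H1 {x : HH} (hx : x ∈ H0) : sigma x ∈ H1 := by
  refine Submodule.span_le (p := H1.comap sigma) |>.2 ?_ hx
  rintro _ ⟨ks, hks, rfl⟩
  rw [SetLike.mem_coe, Submodule.mem_comap, hsigma]
  refine Submodule.smul_mem _ _ (Submodule.subset_span ?_)
  cases ks with
  | nil => exact ⟨[], rfl⟩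
  | cons k ks =>
    obtain ⟨m, rfl⟩ : ∃ m, k = m + 1 := Nat.exists_eq_succ_of_ne_zero (by
      have := hks (by simp)
      simp at this
      omega)
    obtain ⟨l, ls, h⟩ := exists_eWord
      (((List.replicate m AB.a ++ [AB.b] ++ eWord ks).map swapAB).reverse)
    refine ⟨l :: ls, ?_⟩
    change ofW (eWord (l :: ls)) = _
    rw [← h]
    congr 1
    simp [eWord, List.replicate_succ, swapAB]

end Sigma

theorem qshuffle_eq_dual_qstuffle
    -- σ : the 𝒞-linear anti-automorphism of ℌ̂ with σ(a) = ℏb, σ(b) = ℏ⁻¹a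
    (sigma : MonoidAlgebra CC (FreeMonoid AB) →ₗ[CC]
        MonoidAlgebra CC (FreeMonoid AB))
    (hsigma : ∀ w : List AB,
      sigma (ofW w) =
        (LaurentPolynomial.T ((w.count AB.a : ℤ) - (w.count AB.b : ℤ)) : CC)
          • ofW ((w.map swapAB).reverse))
    -- the q-stuffle product *_q on ℌ̂¹: e_k w *_q e_l v =
    -- e_k(w *_q e_l v) + e_l(e_k w *_q v) + e_{k+l}(w *_q v)
    (st : MonoidAlgebra CC (FreeMonoid AB) →ₗ[CC]
        MonoidAlgebra CC (FreeMonoid AB) →ₗ[CC] MonoidAlgebra CC (FreeMonoid AB))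
    (hst_one : ∀ x, st 1 x = x) (hst_one' : ∀ x, st x 1 = x)
    (hst : ∀ (k l : ℕ) (ks ls : List ℕ),
      st (ofW (eWord (k :: ks))) (ofW (eWord (l :: ls))) =
        ofW (eWord [k]) * st (ofW (eWord ks)) (ofW (eWord (l :: ls)))
        + ofW (eWord [l]) * st (ofW (eWord (k :: ks))) (ofW (eWord ls))
        + ofW (eWord [k + l]) * st (ofW (eWord ks)) (ofW (eWord ls)))
    -- the q-shuffle product ⧢_q, the generalized quasi-shuffle product
    -- associated to ⋄_q
    (sh : MonoidAlgebra CC (FreeMonoid AB) →ₗ[CC]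
        MonoidAlgebra CC (FreeMonoid AB) →ₗ[CC] MonoidAlgebra CC (FreeMonoid AB))
    (hsh_one : ∀ x, sh 1 x = x) (hsh_one' : ∀ x, sh x 1 = x)
    (hsh : ∀ (α β : AB) (w v : List AB),
      sh (ofW (α :: w)) (ofW (β :: v)) =
        ofW [α] * sh (ofW w) (ofW (β :: v))
        + ofW [β] * sh (ofW (α :: w)) (ofW v)
        + dq α β * sh (ofW w) (ofW v)) :
    -- conclusion: w ⧢_q v = σ(σ(w) *_q σ(v)) for all w, v ∈ ℌ̂⁰
    ∀ w ∈ H0, ∀ v ∈ H0, sh w v = sigma (st (sigma w) (sigma v)) := by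
  have key : ∀ ks ls : List ℕ, sh (sigma (ofW (eWord ks))) (sigma (ofW (eWord ls))) =
      sigma (st (ofW (eWord ks)) (ofW (eWord ls))) := by
    have h0 : ofW (eWord []) = 1 := rfl
    have s1 : sigma 1 = 1 := by simpa [ofW_nil] using hsigma []
    have sc : ∀ (ks : List ℕ) (k : ℕ), sigma (ofW (eWord (ks ++ [k]))) =
        (LaurentPolynomial.T ((k : ℤ) - 1) : CC) •
          (ofW [AB.a] * (ofW [AB.b] ^ k * sigma (ofW (eWord ks)))) := fun ks k => by
      rw [eWord_append, ofW_append, sigma_mul sigma hsigma, sigma_e sigma hsigma, smul_mul_assoc,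
        mul_assoc]
    intro ks
    induction ks using List.reverseRecOn with
    | nil => intro ls; rw [h0, s1, hsh_one, hst_one]
    | append_singleton ks k ihk =>
      intro ls
      induction ls using List.reverseRecOn with
      | nil => rw [h0, s1, hsh_one', hst_one']
      | append_singleton ls l ihl =>
        have ih1 := ihk (ls ++ [l])
        have ih2 := ihk ls
        rw [stuffle_concat st hst_one hst_one' hst]
        simp only [map_add, sigma_mul sigma hsigma]
        rw [← ih1, ← ihl, ← ih2]
        simp only [sigma_e sigma hsigma, sc, map_smul, LinearMap.smul_apply]
        rw [shuffle_a_a sh hsh, shuffle_pow_left sh hsh_one' hsh,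
          shuffle_pow_right sh hsh_one hsh, shuffle_pow_left sh hsh_one' hsh,
          shuffle_pow_right sh hsh_one hsh]
        -- the powers of `ℏ` in the diagonal term: `(k - 1) + (l - 1) + 1 = (k + l) - 1`
        have hT : (LaurentPolynomial.T ((l : ℤ) - 1) * (LaurentPolynomial.T ((k : ℤ) - 1) * hbar)
            : CC) = LaurentPolynomial.T (((k + l : ℕ) : ℤ) - 1) := by
          rw [hbar, ← LaurentPolynomial.T_add, ← LaurentPolynomial.T_add]
          congr 1
          push_cast
          ring
        simp only [smul_add, smul_mul_assoc, mul_smul_comm, smul_smul, hT, mul_assoc, pow_add,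
          mul_comm (LaurentPolynomial.T ((l : ℤ) - 1) : CC) (LaurentPolynomial.T ((k : ℤ) - 1))]
  -- the identity extends bilinearly to `ℌ̂¹`
  have ext : ∀ x ∈ H1, ∀ y ∈ H1, sh (sigma x) (sigma y) = sigma (st x y) := by
    intro x hx y hy
    induction hx using Submodule.span_induction with
    | mem x hx =>
      obtain ⟨ks, rfl⟩ := hx
      induction hy using Submodule.span_induction with
      | mem y hy =>
        obtain ⟨ls, rfl⟩ := hy
        exact key ks ls
      | zero => simp
      | add y y' _ _ h h' => simp only [map_add, h, h']
      | smul r y _ h => simp only [map_smul, h]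
    | zero => simp
    | add x x' _ _ h h' => simp only [map_add, LinearMap.add_apply, h, h']
    | smul r x _ h => simp only [map_smul, LinearMap.smul_apply, h]
  intro w hw v hv
  rw [← ext _ (sigma_mem_H1 sigma hsigma hw) _ (sigma_mem_H1 sigma hsigma hv),
    sigma_sigma sigma hsigma, sigma_sigma sigma hsigma]
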